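/- Let μ be a Borel probability measure on Ω absolutely continuous with respect to d-dimensional Lebesgue measure, let ν be a Borel probability measure on Ω, let u0 be a Kantorovich potential and T0 an optimal transport map for W1(μ,ν), and let μ̃ = (I − η∇u0)_#μ. If η > 0 and μ({x ∈ Ω : |x − T0(x)| ≥ η}) > 1/2, then W1(μ̃, ν) < W1(μ, ν). -/

import Mathlib

open MeasureTheory Set

noncomputable section

/-- The Wasserstein 1 distance between two Borel probability measures, defined as the
infimum of the transport cost over all couplings. -/
def W1 {d : ℕ} (μ ν : Measure (EuclideanSpace ℝ (Fin d))) : ℝ :=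
  sInf {c | ∃ γ : Measure (EuclideanSpace ℝ (Fin d) × EuclideanSpace ℝ (Fin d)),
    IsProbabilityMeasure γ ∧ γ.map Prod.fst = μ ∧ γ.map Prod.snd = ν ∧
    c = ∫ p, ‖p.1 - p.2‖ ∂γ}

/-- `u0` is a Kantorovich potential for `W1(μ, ν)`: it is 1-Lipschitz on Ω and achieves
the supremum in the dual problem. -/
def IsKantorovichPotential {d : ℕ} (Ω : Set (EuclideanSpace ℝ (Fin d)))
    (μ ν : Measure (EuclideanSpace ℝ (Fin d))) (u0 : EuclideanSpace ℝ (Fin d) → ℝ) : Prop :=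
  LipschitzOnWith 1 u0 Ω ∧
  ∀ u : EuclideanSpace ℝ (Fin d) → ℝ, LipschitzOnWith 1 u Ω →
    ∫ x, u x ∂μ - ∫ x, u x ∂ν ≤ ∫ x, u0 x ∂μ - ∫ x, u0 x ∂ν

/-- `T` is an optimal transport map for `W1(μ, ν)`: a Borel map from Ω to Ω pushing μ
forward to ν whose transport cost equals `W1 μ ν`. -/
def IsOptimalMap {d : ℕ} (Ω : Set (EuclideanSpace ℝ (Fin d)))
    (μ ν : Measure (EuclideanSpace ℝ (Fin d)))
    (T : EuclideanSpace ℝ (Fin d) → EuclideanSpace ℝ (Fin d)) : Prop :=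
  Measurable T ∧ MapsTo T Ω Ω ∧ μ.map T = ν ∧ ∫ x, ‖x - T x‖ ∂μ = W1 μ ν

/-!
By Kantorovich–Rubinstein duality the potential and the optimal map have the same value, so
`u0 x - u0 (T0 x) = ‖x - T0 x‖` for `μ`-almost every `x`. Hence `u0` decreases at unit rate along
the segment from `x` to `T0 x`, and `-∇u0 x` is the unit vector pointing from `x` to `T0 x` whenever
these differ. A step of length `η` in this direction reduces the distance to `T0 x` by `η` if
`η ≤ ‖x - T0 x‖`, and increases it by at most `η` otherwise. Transporting `x - η ∇u0 x` to `T0 x`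
therefore costs at most `W1 μ ν + η (1 - 2 μ {x | η ≤ ‖x - T0 x‖})`.

The duality follows from M. Riesz's extension theorem: integration of `φ x + ψ y` against `μ ⊗ ν`
extends to a functional on `C(X × Y)` that is positive and also nonnegative at `b - c`, where `b`
bounds the dual problem for the cost `c`. The measure representing it is a coupling of cost at
most `b`.
-/

section PositiveExtension

variable {E : Type*} [AddCommGroup E] [PartialOrder E] [IsOrderedAddMonoid E] [Module ℝ E]
  [PosSMulMono ℝ E]

lemma exists_positive_extension_nonneg_apply (f : E →ₗ.[ℝ] ℝ) (v : E)
    (hf : ∀ x : f.domain, 0 ≤ (x : E) → 0 ≤ f x)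
    (hfv : ∀ x : f.domain, v ≤ (x : E) → 0 ≤ f x)
    (hdom : ∀ y : E, ∃ x : f.domain, y ≤ (x : E)) :
    ∃ g : E →ₗ[ℝ] ℝ, (∀ x : f.domain, g x = f x) ∧ (∀ x, 0 ≤ x → 0 ≤ g x) ∧ 0 ≤ g v := by
  let cone : PointedCone ℝ E := PointedCone.positive ℝ E ⊔ PointedCone.hull ℝ {v}
  have positive_le : ∀ x : E, 0 ≤ x → x ∈ cone := fun x hx ↦
    Submodule.mem_sup_left ((PointedCone.mem_positive ℝ E).2 hx)
  have hf_cone : ∀ x : f.domain, (x : E) ∈ cone → 0 ≤ f x := by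
    intro x hx
    obtain ⟨p, hp, w, hw, hpw⟩ := Submodule.mem_sup.1 hx
    obtain ⟨⟨t, ht⟩, rfl⟩ := Submodule.mem_span_singleton.1 hw
    replace hpw : p + t • v = x := hpw
    have htx : t • v ≤ x := hpw ▸ le_add_of_nonneg_left hp
    obtain rfl | ht_pos := ht.eq_or_lt
    · exact hf x (by simpa using htx)
    · have hv : v ≤ (t⁻¹ • x : f.domain) := by
        simpa [smul_smul, ht_pos.ne'] using smul_le_smul_of_nonneg_left htx (inv_nonneg.2 ht)
      have : 0 ≤ t⁻¹ * f x := by simpa only [f.map_smul, smul_eq_mul] using hfv _ hv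
      exact nonneg_of_mul_nonneg_right this (inv_pos.2 ht_pos)
  have hdom_cone : ∀ y : E, ∃ x : f.domain, (x : E) + y ∈ cone := by
    intro y
    obtain ⟨x, hx⟩ := hdom (-y)
    exact ⟨x, positive_le _ (neg_le_iff_add_nonneg.1 hx)⟩
  obtain ⟨g, hgf, hg⟩ := riesz_extension cone f hf_cone hdom_cone
  exact ⟨g, hgf, fun x hx ↦ hg x (positive_le x hx),
    hg v (Submodule.mem_sup_right (Submodule.mem_span_singleton_self v))⟩

end PositiveExtension

/-- `γ` is a coupling (transport plan) of `μ` and `ν`: its marginals are `μ` and `ν`. -/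
structure IsCoupling {X Y : Type*} [MeasurableSpace X] [MeasurableSpace Y]
    (γ : Measure (X × Y)) (μ : Measure X) (ν : Measure Y) : Prop where
  map_fst : γ.map Prod.fst = μ
  map_snd : γ.map Prod.snd = ν

namespace IsCoupling

variable {X Y X' Y' Ω : Type*} [MeasurableSpace X] [MeasurableSpace Y] [MeasurableSpace X']
  [MeasurableSpace Y'] [MeasurableSpace Ω]

lemma isProbabilityMeasure {γ : Measure (X × Y)} {μ : Measure X} {ν : Measure Y}
    [IsProbabilityMeasure μ] (hγ : IsCoupling γ μ ν) : IsProbabilityMeasure γ :=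
  have : IsProbabilityMeasure (γ.map Prod.fst) := hγ.map_fst ▸ ‹IsProbabilityMeasure μ›
  Measure.isProbabilityMeasure_of_map Prod.fst

lemma map_prodMap {γ : Measure (X × Y)} {μ : Measure X} {ν : Measure Y} (hγ : IsCoupling γ μ ν)
    {f : X → X'} {g : Y → Y'} (hf : Measurable f) (hg : Measurable g) :
    IsCoupling (γ.map (Prod.map f g)) (μ.map f) (ν.map g) where
  map_fst := by
    rw [Measure.map_map measurable_fst (hf.prodMap hg), Prod.map_fst', ← hγ.map_fst,
      Measure.map_map hf measurable_fst]
  map_snd := by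
    rw [Measure.map_map measurable_snd (hf.prodMap hg), Prod.map_snd', ← hγ.map_snd,
      Measure.map_map hg measurable_snd]

lemma map_prodMk (P : Measure Ω) {f : Ω → X} {g : Ω → Y} (hf : Measurable f)
    (hg : Measurable g) : IsCoupling (P.map fun ω ↦ (f ω, g ω)) (P.map f) (P.map g) where
  map_fst := Measure.map_map measurable_fst (hf.prodMk hg)
  map_snd := Measure.map_map measurable_snd (hf.prodMk hg)

end IsCoupling

section KantorovichDuality

lemma integrable_of_continuous {Z : Type*} [TopologicalSpace Z] [CompactSpace Z]
    [MeasurableSpace Z] [OpensMeasurableSpace Z] {P : Measure Z} [IsFiniteMeasure P] {v : Z → ℝ}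
    (hv : Continuous v) : Integrable v P :=
  hv.integrable_of_hasCompactSupport (.of_compactSpace v)

lemma map_eq_of_forall_integral_comp_eq {Z X : Type*} [TopologicalSpace Z] [MeasurableSpace Z]
    [OpensMeasurableSpace Z] [TopologicalSpace X] [HasOuterApproxClosed X] [MeasurableSpace X]
    [BorelSpace X] {γ : Measure Z} {μ : Measure X} [IsFiniteMeasure γ] [IsFiniteMeasure μ]
    {f : Z → X} (hf : Continuous f)
    (h : ∀ φ : BoundedContinuousFunction X ℝ, ∫ z, φ (f z) ∂γ = ∫ x, φ x ∂μ) : γ.map f = μ :=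
  ext_of_forall_integral_eq_of_IsFiniteMeasure fun φ ↦ by
    rw [integral_map hf.aemeasurable φ.continuous.aestronglyMeasurable, h]

open scoped CompactlySupported in
lemma exists_isFiniteMeasure_integral_eq {Z : Type*} [TopologicalSpace Z] [T2Space Z]
    [CompactSpace Z] [MeasurableSpace Z] [BorelSpace Z] (L : C(Z, ℝ) →ₗ[ℝ] ℝ)
    (hL : ∀ h, 0 ≤ h → 0 ≤ L h) :
    ∃ γ : Measure Z, IsFiniteMeasure γ ∧ ∀ h : C(Z, ℝ), ∫ z, h z ∂γ = L h := by
  let toContinuous : C_c(Z, ℝ) →ₗ[ℝ] C(Z, ℝ) :=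
    { toFun h := h.toContinuousMap
      map_add' _ _ := rfl
      map_smul' _ _ := rfl }
  let Λ : C_c(Z, ℝ) →ₚ[ℝ] ℝ := .mk₀ (L ∘ₗ toContinuous) fun h hh ↦ hL _ hh
  exact ⟨RealRMK.rieszMeasure Λ, ⟨isCompact_univ.measure_lt_top⟩, fun h ↦
    RealRMK.integral_rieszMeasure Λ (CompactlySupportedContinuousMap.continuousMapEquiv h)⟩

/-- Integration against a finite measure, as a linear functional on the continuous functions on a
compact space. -/
def continuousIntegral {Z : Type*} [TopologicalSpace Z] [CompactSpace Z] [MeasurableSpace Z]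
    [OpensMeasurableSpace Z] (P : Measure Z) [IsFiniteMeasure P] : C(Z, ℝ) →ₗ[ℝ] ℝ where
  toFun h := ∫ z, h z ∂P
  map_add' g h := integral_add (integrable_of_continuous g.continuous)
    (integrable_of_continuous h.continuous)
  map_smul' t h := integral_const_mul t h

variable {X Y : Type*} [TopologicalSpace X] [TopologicalSpace Y]

/-- The function `(x, y) ↦ φ x + ψ y`, often written `φ ⊕ ψ`, as a linear function of `(φ, ψ)`:
the shape of the admissible functions in Kantorovich's dual problem. -/
def splitSum : C(X, ℝ) × C(Y, ℝ) →ₗ[ℝ] C(X × Y, ℝ) where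
  toFun p := p.1.comp .fst + p.2.comp .snd
  map_add' p q := by ext; simp [add_add_add_comm]
  map_smul' t p := by ext; simp

@[simp]
lemma splitSum_apply (φ : C(X, ℝ)) (ψ : C(Y, ℝ)) (z : X × Y) :
    splitSum (φ, ψ) z = φ z.1 + ψ z.2 := rfl

variable [CompactSpace X] [CompactSpace Y] [MeasurableSpace X] [MeasurableSpace Y]
  [BorelSpace X] [BorelSpace Y] [SecondCountableTopologyEither X Y]
  (μ : Measure X) (ν : Measure Y) [IsProbabilityMeasure μ] [IsProbabilityMeasure ν]

lemma continuousIntegral_prod_splitSum (φ : C(X, ℝ)) (ψ : C(Y, ℝ)) :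
    continuousIntegral (μ.prod ν) (splitSum (φ, ψ)) = ∫ x, φ x ∂μ + ∫ y, ψ y ∂ν := by
  have hφ : Integrable φ μ := integrable_of_continuous φ.continuous
  have hψ : Integrable ψ ν := integrable_of_continuous ψ.continuous
  calc ∫ z : X × Y, (φ z.1 + ψ z.2) ∂(μ.prod ν)
      = ∫ z : X × Y, φ z.1 ∂(μ.prod ν) + ∫ z : X × Y, ψ z.2 ∂(μ.prod ν) :=
        integral_add (hφ.comp_fst ν) (hψ.comp_snd μ)
    _ = ∫ x, φ x ∂μ + ∫ y, ψ y ∂ν := by simp [integral_fun_fst, integral_fun_snd]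

variable {μ ν}

lemma exists_positive_functional_of_dual_le (c : C(X × Y, ℝ)) {b : ℝ}
    (hb : ∀ (φ : C(X, ℝ)) (ψ : C(Y, ℝ)), (∀ x y, φ x + ψ y ≤ c (x, y)) →
      ∫ x, φ x ∂μ + ∫ y, ψ y ∂ν ≤ b) :
    ∃ L : C(X × Y, ℝ) →ₗ[ℝ] ℝ, (∀ h, 0 ≤ h → 0 ≤ L h) ∧
      (∀ φ ψ, L (splitSum (φ, ψ)) = ∫ x, φ x ∂μ + ∫ y, ψ y ∂ν) ∧ L c ≤ b := by
  let f : C(X × Y, ℝ) →ₗ.[ℝ] ℝ :=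
    (continuousIntegral (μ.prod ν)).toPMap (LinearMap.range splitSum)
  have mem_domain (φ : C(X, ℝ)) (ψ : C(Y, ℝ)) : splitSum (φ, ψ) ∈ f.domain := ⟨(φ, ψ), rfl⟩
  let budget : C(X × Y, ℝ) := splitSum (.const X b, 0)
  have hf : ∀ h : f.domain, 0 ≤ (h : C(X × Y, ℝ)) → 0 ≤ f h := fun _ hh ↦ integral_nonneg hh
  have hf_budget : ∀ h : f.domain, budget - c ≤ h → 0 ≤ f h := by
    rintro ⟨_, ⟨φ, ψ⟩, rfl⟩ hh
    have hadm : ∀ x y, (.const X b - φ : C(X, ℝ)) x + (-ψ) y ≤ c (x, y) := fun x y ↦ by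
      have : b - c (x, y) ≤ φ x + ψ y := by simpa [budget] using hh (x, y)
      simp only [ContinuousMap.sub_apply, ContinuousMap.const_apply, ContinuousMap.neg_apply]
      linarith
    have hsplit : splitSum (.const X b - φ, -ψ) = budget - splitSum (φ, ψ) := by
      rw [← map_sub, Prod.mk_sub_mk, zero_sub]
    have hbudget : continuousIntegral (μ.prod ν) budget = b := by
      simp [budget, continuousIntegral_prod_splitSum]
    have hdual := hb _ _ hadm
    rw [← continuousIntegral_prod_splitSum, hsplit, map_sub, hbudget, sub_le_self_iff] at hdual
    exact hdual
  have hdom : ∀ h : C(X × Y, ℝ), ∃ g : f.domain, h ≤ g := fun h ↦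
    ⟨⟨_, mem_domain (.const X ‖h‖) 0⟩, fun z ↦ by
      simpa using (le_abs_self _).trans (h.norm_coe_le_norm z)⟩
  obtain ⟨L, hLf, hL, hLv⟩ :=
    exists_positive_extension_nonneg_apply f (budget - c) hf hf_budget hdom
  have hL_split (φ : C(X, ℝ)) (ψ : C(Y, ℝ)) :
      L (splitSum (φ, ψ)) = ∫ x, φ x ∂μ + ∫ y, ψ y ∂ν :=
    (hLf ⟨_, mem_domain φ ψ⟩).trans (continuousIntegral_prod_splitSum μ ν φ ψ)
  refine ⟨L, hL, hL_split, ?_⟩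
  have hL_budget : L budget = b := by simp [budget, hL_split]
  rwa [map_sub, hL_budget, sub_nonneg] at hLv

theorem exists_isCoupling_integral_le [T2Space X] [T2Space Y] [HasOuterApproxClosed X]
    [HasOuterApproxClosed Y] (c : C(X × Y, ℝ)) {b : ℝ}
    (hb : ∀ (φ : C(X, ℝ)) (ψ : C(Y, ℝ)), (∀ x y, φ x + ψ y ≤ c (x, y)) →
      ∫ x, φ x ∂μ + ∫ y, ψ y ∂ν ≤ b) :
    ∃ γ : Measure (X × Y), IsCoupling γ μ ν ∧ ∫ z, c z ∂γ ≤ b := by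
  obtain ⟨L, hL, hL_split, hLc⟩ := exists_positive_functional_of_dual_le c hb
  obtain ⟨γ, hγ_fin, hγL⟩ := exists_isFiniteMeasure_integral_eq L hL
  refine ⟨γ, ⟨?_, ?_⟩, (hγL c).trans_le hLc⟩
  · refine map_eq_of_forall_integral_comp_eq continuous_fst fun φ ↦ ?_
    simpa using (hγL (splitSum (φ.toContinuousMap, 0))).trans (hL_split _ _)
  · refine map_eq_of_forall_integral_comp_eq continuous_snd fun ψ ↦ ?_
    simpa using (hγL (splitSum (0, ψ.toContinuousMap))).trans (hL_split _ _)

end KantorovichDuality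

section KantorovichRubinstein

lemma exists_lipschitzWith_one_between {X : Type*} [PseudoMetricSpace X] {φ ψ : X → ℝ}
    (h : ∀ x y, φ x + ψ y ≤ dist x y) :
    ∃ u : X → ℝ, LipschitzWith 1 u ∧ φ ≤ u ∧ u ≤ -ψ := by
  let u : X → ℝ := fun x ↦ ⨅ y, (dist x y - ψ y)
  have hφ_le (x y : X) : φ x ≤ dist x y - ψ y := le_sub_iff_add_le.2 (h x y)
  have u_le (x y : X) : u x ≤ dist x y - ψ y :=
    ciInf_le ⟨φ x, forall_mem_range.2 (hφ_le x)⟩ y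
  refine ⟨u, .of_le_add fun x z ↦ ?_, fun x ↦ ?_, fun x ↦ by simpa using u_le x x⟩
  · have : Nonempty X := ⟨x⟩
    refine sub_le_iff_le_add.1 (le_ciInf fun y ↦ ?_)
    linarith [u_le x y, dist_triangle x z y]
  · have : Nonempty X := ⟨x⟩
    exact le_ciInf (hφ_le x)

theorem exists_isCoupling_integral_dist_le {X : Type*} [MetricSpace X] [CompactSpace X]
    [MeasurableSpace X] [BorelSpace X] {μ ν : Measure X} [IsProbabilityMeasure μ]
    [IsProbabilityMeasure ν] {b : ℝ}
    (hb : ∀ u : X → ℝ, LipschitzWith 1 u → ∫ x, u x ∂μ - ∫ x, u x ∂ν ≤ b) :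
    ∃ γ : Measure (X × X), IsCoupling γ μ ν ∧ ∫ z, dist z.1 z.2 ∂γ ≤ b := by
  refine exists_isCoupling_integral_le ⟨fun z ↦ dist z.1 z.2, by fun_prop⟩ fun φ ψ hφψ ↦ ?_
  obtain ⟨u, hu, hφu, huψ⟩ := exists_lipschitzWith_one_between hφψ
  have hφ_le : ∫ x, φ x ∂μ ≤ ∫ x, u x ∂μ :=
    integral_mono (integrable_of_continuous φ.continuous) (integrable_of_continuous hu.continuous)
      hφu
  have hψ_le : ∫ x, u x ∂ν ≤ -∫ x, ψ x ∂ν :=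
    integral_neg (μ := ν) ψ ▸ integral_mono (integrable_of_continuous hu.continuous)
      (integrable_of_continuous ψ.continuous.neg) huψ
  linarith [hb u hu]

end KantorovichRubinstein

section Gradient

variable {F : Type*} [NormedAddCommGroup F] [InnerProductSpace ℝ F]

lemma norm_smul_eq_of_inner_eq_norm {g v : F} (hg : ‖g‖ ≤ 1) (hgv : inner ℝ g v = ‖v‖) :
    ‖v‖ • g = v := by
  obtain rfl | hv := eq_or_ne v 0
  · simp
  have hv_pos : 0 < ‖v‖ := norm_pos_iff.2 hv
  have hg_one : ‖g‖ = 1 := by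
    refine hg.antisymm (le_of_mul_le_mul_right ?_ hv_pos)
    simpa [hgv] using real_inner_le_norm g v
  rw [inner_eq_norm_mul_iff_real.1 (by rw [hgv, hg_one, one_mul]), hg_one, one_smul]

lemma norm_sub_smul_sub_le {g x y : F} {η : ℝ} (hg : ‖g‖ ≤ 1) (hη : 0 ≤ η) :
    ‖x - η • g - y‖ ≤ ‖x - y‖ + η :=
  calc ‖x - η • g - y‖ = ‖(x - y) - η • g‖ := by rw [sub_right_comm]
    _ ≤ ‖x - y‖ + ‖η • g‖ := norm_sub_le _ _
    _ = ‖x - y‖ + η * ‖g‖ := by rw [norm_smul, Real.norm_of_nonneg hη]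
    _ ≤ ‖x - y‖ + η := by gcongr; exact mul_le_of_le_one_right hη hg

lemma norm_sub_smul_sub_le_of_inner_eq_norm {g x y : F} {η : ℝ} (hg : ‖g‖ ≤ 1)
    (hgxy : inner ℝ g (x - y) = ‖x - y‖) (hη : η ≤ ‖x - y‖) :
    ‖x - η • g - y‖ ≤ ‖x - y‖ - η :=
  calc ‖x - η • g - y‖ = ‖(‖x - y‖ - η) • g‖ := by
        rw [sub_smul, norm_smul_eq_of_inner_eq_norm hg hgxy, sub_right_comm]
    _ = (‖x - y‖ - η) * ‖g‖ := by rw [norm_smul, Real.norm_of_nonneg (sub_nonneg.2 hη)]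
    _ ≤ ‖x - y‖ - η := mul_le_of_le_one_right (sub_nonneg.2 hη) hg

lemma sub_le_norm_sub_of_lipschitzOnWith_one {E : Type*} [SeminormedAddCommGroup E] {s : Set E}
    {u : E → ℝ} (hu : LipschitzOnWith 1 u s) {x y : E} (hx : x ∈ s) (hy : y ∈ s) :
    u x - u y ≤ ‖x - y‖ :=
  (le_abs_self _).trans (by simpa using hu.norm_sub_le hx hy)

open AffineMap in
lemma apply_lineMap_of_sub_eq_norm_sub {E : Type*} [SeminormedAddCommGroup E] [NormedSpace ℝ E]
    {s : Set E} (hs : Convex ℝ s) {u : E → ℝ} (hu : LipschitzOnWith 1 u s) {x y : E}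
    (hx : x ∈ s) (hy : y ∈ s) (hxy : u x - u y = ‖x - y‖) {t : ℝ} (ht : t ∈ Icc (0 : ℝ) 1) :
    u (lineMap x y t) = u x - t * ‖x - y‖ := by
  have hz : lineMap x y t ∈ s := hs.lineMap_mem hx hy ht
  have hxz : u x - u (lineMap x y t) ≤ t * ‖x - y‖ := by
    simpa [← dist_eq_norm, abs_of_nonneg ht.1] using
      sub_le_norm_sub_of_lipschitzOnWith_one hu hx hz
  have hzy : u (lineMap x y t) - u y ≤ (1 - t) * ‖x - y‖ := by
    have h := sub_le_norm_sub_of_lipschitzOnWith_one hu hz hy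
    rwa [← dist_eq_norm, dist_lineMap_right, Real.norm_of_nonneg (sub_nonneg.2 ht.2),
      dist_eq_norm] at h
  linarith

variable [CompleteSpace F] {s : Set F} {u : F → ℝ} {g x y : F}

open AffineMap in
lemma inner_gradient_eq_norm_sub_of_sub_eq_norm_sub (hs : Convex ℝ s)
    (hu : LipschitzOnWith 1 u s) (hx : x ∈ s) (hy : y ∈ s) (hg : HasGradientWithinAt u g s x)
    (hxy : u x - u y = ‖x - y‖) : inner ℝ g (x - y) = ‖x - y‖ := by
  have hderiv_chain : HasDerivWithinAt (u ∘ lineMap x y) (inner ℝ g (y - x)) (Icc (0 : ℝ) 1) 0 := by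
    rw [← lineMap_apply_zero (k := ℝ) x y] at hg
    simpa using hg.hasFDerivWithinAt.comp_hasDerivWithinAt (0 : ℝ) hasDerivWithinAt_lineMap
      fun t ht ↦ hs.lineMap_mem hx hy ht
  have hderiv_affine : HasDerivWithinAt (u ∘ lineMap x y) (-‖x - y‖) (Icc (0 : ℝ) 1) 0 := by
    have h := (((hasDerivAt_id (0 : ℝ)).mul_const ‖x - y‖).const_sub (u x)).hasDerivWithinAt
      (s := Icc 0 1)
    rw [one_mul] at h
    refine h.congr_of_mem (fun t ht ↦ ?_) (by simp)
    exact apply_lineMap_of_sub_eq_norm_sub hs hu hx hy hxy ht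
  have hinner : inner ℝ g (y - x) = -‖x - y‖ :=
    (uniqueDiffOn_Icc_zero_one 0 (by simp)).eq_deriv _ hderiv_chain hderiv_affine
  rw [← neg_sub y x, inner_neg_right, hinner, neg_neg, neg_sub]

lemma norm_gradient_le_one_of_lipschitzOnWith_one (hs : s ∈ nhds x) (hu : LipschitzOnWith 1 u s)
    (hg : HasGradientWithinAt u g s x) : ‖g‖ ≤ 1 := by
  simpa using (hg.hasFDerivWithinAt.hasFDerivAt hs).le_of_lipschitzOn hs hu

end Gradient

section ConcentratedMeasure

lemma map_val_comap_val {α : Type*} [MeasurableSpace α] {s : Set α} (hs : MeasurableSet s)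
    {P : Measure α} (hP : ∀ᵐ x ∂P, x ∈ s) :
    (P.comap ((↑) : s → α)).map (↑) = P := by
  rw [map_comap_subtype_coe hs, Measure.restrict_eq_self_of_ae_mem hP]

lemma isProbabilityMeasure_comap_val {α : Type*} [MeasurableSpace α] {s : Set α}
    (hs : MeasurableSet s) {P : Measure α} [IsProbabilityMeasure P] (hP : ∀ᵐ x ∂P, x ∈ s) :
    IsProbabilityMeasure (P.comap ((↑) : s → α)) :=
  (MeasurableEmbedding.subtype_coe hs).isProbabilityMeasure_comap (by simpa using hP)

lemma integral_comap_val {α : Type*} [MeasurableSpace α] {s : Set α} (hs : MeasurableSet s)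
    {P : Measure α} (hP : ∀ᵐ x ∂P, x ∈ s) (v : α → ℝ) :
    ∫ x : s, v x ∂(P.comap (↑)) = ∫ x, v x ∂P := by
  rw [integral_subtype_comap hs, Measure.restrict_eq_self_of_ae_mem hP]

lemma integrable_of_continuousOn {α : Type*} [TopologicalSpace α] [T2Space α]
    [MeasurableSpace α] [OpensMeasurableSpace α] {P : Measure α} [IsFiniteMeasure P] {s : Set α}
    (hs : IsCompact s) (hP : ∀ᵐ x ∂P, x ∈ s) {v : α → ℝ} (hv : ContinuousOn v s) :
    Integrable v P := by
  have := hv.integrableOn_compact (μ := P) hs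
  rwa [IntegrableOn, Measure.restrict_eq_self_of_ae_mem hP] at this

lemma integrable_norm_sub {E : Type*} [NormedAddCommGroup E] [MeasurableSpace E] [BorelSpace E]
    [SecondCountableTopology E] {P : Measure E} [IsFiniteMeasure P] {s : Set E}
    (hs : Bornology.IsBounded s) (hP : ∀ᵐ x ∂P, x ∈ s) {T : E → E} (hT : Measurable T)
    (hTs : MapsTo T s s) : Integrable (fun x ↦ ‖x - T x‖) P := by
  refine .of_bound (by fun_prop) (Metric.diam s) ?_
  filter_upwards [hP] with x hx
  simpa [dist_eq_norm] using Metric.dist_le_diam_of_mem hs hx (hTs hx)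

lemma ae_mem_interior_of_convex {E : Type*} [NormedAddCommGroup E] [NormedSpace ℝ E]
    [FiniteDimensional ℝ E] [MeasurableSpace E] [BorelSpace E] {P m : Measure E}
    [m.IsAddHaarMeasure] {s : Set E} (hs : Convex ℝ s) (hPm : P ≪ m) (hPs : ∀ᵐ x ∂P, x ∈ s) :
    ∀ᵐ x ∂P, x ∈ interior s := by
  have hfrontier : ∀ᵐ x ∂P, x ∉ frontier s :=
    measure_eq_zero_iff_ae_notMem.1 (hPm (hs.addHaar_frontier m))
  filter_upwards [hPs, hfrontier] with x hx hx_frontier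
  by_contra hx_int
  exact hx_frontier ⟨subset_closure hx, hx_int⟩

end ConcentratedMeasure

section Wasserstein

variable {d : ℕ} {Ω : Set (EuclideanSpace ℝ (Fin d))} {μ ν : Measure (EuclideanSpace ℝ (Fin d))}
  {u : EuclideanSpace ℝ (Fin d) → ℝ} {T f : EuclideanSpace ℝ (Fin d) → EuclideanSpace ℝ (Fin d)}
  {η : ℝ}

lemma W1_le_integral_of_isCoupling [IsProbabilityMeasure μ]
    {γ : Measure (EuclideanSpace ℝ (Fin d) × EuclideanSpace ℝ (Fin d))}
    (hγ : IsCoupling γ μ ν) : W1 μ ν ≤ ∫ p, ‖p.1 - p.2‖ ∂γ := by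
  refine csInf_le ⟨0, ?_⟩ ⟨γ, hγ.isProbabilityMeasure, hγ.map_fst, hγ.map_snd, rfl⟩
  rintro _ ⟨γ', -, -, -, rfl⟩
  exact integral_nonneg fun _ ↦ norm_nonneg _

lemma W1_map_map_le_integral [IsProbabilityMeasure μ] (hf : Measurable f) (hT : Measurable T) :
    W1 (μ.map f) (μ.map T) ≤ ∫ x, ‖f x - T x‖ ∂μ := by
  have : IsProbabilityMeasure (μ.map f) := Measure.isProbabilityMeasure_map hf.aemeasurable
  refine (W1_le_integral_of_isCoupling (.map_prodMk μ hf hT)).trans_eq ?_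
  exact integral_map (hf.prodMk hT).aemeasurable
    (Continuous.aestronglyMeasurable (by fun_prop))

theorem W1_le_of_forall_lipschitzOnWith_one [IsProbabilityMeasure μ] [IsProbabilityMeasure ν]
    (hΩ : IsCompact Ω) (hμΩ : ∀ᵐ x ∂μ, x ∈ Ω) (hνΩ : ∀ᵐ x ∂ν, x ∈ Ω) {b : ℝ}
    (hb : ∀ v : EuclideanSpace ℝ (Fin d) → ℝ, LipschitzOnWith 1 v Ω →
      ∫ x, v x ∂μ - ∫ x, v x ∂ν ≤ b) :
    W1 μ ν ≤ b := by
  have hΩm := hΩ.measurableSet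
  have : CompactSpace Ω := isCompact_iff_compactSpace.1 hΩ
  have := isProbabilityMeasure_comap_val hΩm hμΩ
  have := isProbabilityMeasure_comap_val hΩm hνΩ
  have hb_subtype (v : Ω → ℝ) (hv : LipschitzWith 1 v) :
      ∫ x, v x ∂(μ.comap (↑)) - ∫ x, v x ∂(ν.comap (↑)) ≤ b := by
    let w : EuclideanSpace ℝ (Fin d) → ℝ := Function.extend (↑) v 0
    have hwv : Ω.domRestrict w = v := funext (Subtype.val_injective.extend_apply v 0)
    have hw := hb w (lipschitzOnWith_iff_restrict.2 (hwv.symm ▸ hv))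
    rw [← integral_comap_val hΩm hμΩ, ← integral_comap_val hΩm hνΩ] at hw
    rwa [← hwv]
  obtain ⟨γ, hγ, hγb⟩ := exists_isCoupling_integral_dist_le (X := Ω)
    (μ := μ.comap (↑)) (ν := ν.comap (↑)) hb_subtype
  have hγ_map := hγ.map_prodMap measurable_subtype_coe measurable_subtype_coe
  rw [map_val_comap_val hΩm hμΩ, map_val_comap_val hΩm hνΩ] at hγ_map
  refine (W1_le_integral_of_isCoupling hγ_map).trans (hγb.trans_eq' ?_)
  rw [integral_map (measurable_subtype_coe.prodMap measurable_subtype_coe).aemeasurable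
    (Continuous.aestronglyMeasurable (by fun_prop))]
  simp only [Subtype.dist_eq, dist_eq_norm, Prod.map_fst, Prod.map_snd]

lemma ae_sub_apply_eq_norm_sub [IsProbabilityMeasure μ] (hΩ : IsCompact Ω)
    (hμΩ : ∀ᵐ x ∂μ, x ∈ Ω) (hu : IsKantorovichPotential Ω μ ν u) (hT : IsOptimalMap Ω μ ν T) :
    ∀ᵐ x ∂μ, u x - u (T x) = ‖x - T x‖ := by
  obtain ⟨hu_lip, hu_max⟩ := hu
  obtain ⟨hTm, hTΩ, rfl, hT_cost⟩ := hT
  have : IsProbabilityMeasure (μ.map T) := Measure.isProbabilityMeasure_map hTm.aemeasurable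
  have hνΩ : ∀ᵐ y ∂μ.map T, y ∈ Ω :=
    (ae_map_iff hTm.aemeasurable hΩ.measurableSet).2 (hμΩ.mono hTΩ)
  have hu_int : Integrable u μ := integrable_of_continuousOn hΩ hμΩ hu_lip.continuousOn
  have hu_int_map : Integrable u (μ.map T) :=
    integrable_of_continuousOn hΩ hνΩ hu_lip.continuousOn
  have huT_int : Integrable (fun x ↦ u (T x)) μ := hu_int_map.comp_measurable hTm
  have hcost_int := integrable_norm_sub hΩ.isBounded hμΩ hTm hTΩ
  have hle : (fun x ↦ u x - u (T x)) ≤ᵐ[μ] fun x ↦ ‖x - T x‖ :=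
    hμΩ.mono fun x hx ↦ sub_le_norm_sub_of_lipschitzOnWith_one hu_lip hx (hTΩ hx)
  have hcost_le : ∫ x, ‖x - T x‖ ∂μ ≤ ∫ x, (u x - u (T x)) ∂μ := by
    rw [integral_sub hu_int huT_int, ← integral_map hTm.aemeasurable hu_int_map.1, hT_cost]
    exact W1_le_of_forall_lipschitzOnWith_one hΩ hμΩ hνΩ hu_max
  exact (integral_eq_iff_of_ae_le (hu_int.sub huT_int) hcost_int hle).1
    ((integral_mono_ae (hu_int.sub huT_int) hcost_int hle).antisymm hcost_le)

lemma ae_norm_descent_sub_le [IsProbabilityMeasure μ]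
    (hΩ : IsCompact Ω) (hΩv : Convex ℝ Ω) (hμΩ : ∀ᵐ x ∂μ, x ∈ Ω)
    (hμ : μ ≪ volume) (hu : IsKantorovichPotential Ω μ ν u) (hT : IsOptimalMap Ω μ ν T)
    (hη : 0 ≤ η) (hf : ∀ᵐ x ∂μ, ∃ g, HasGradientWithinAt u g Ω x ∧ f x = x - η • g) :
    ∀ᵐ x ∂μ, ‖f x - T x‖ ≤
      ‖x - T x‖ + (η - {x | x ∈ Ω ∧ η ≤ ‖x - T x‖}.indicator (fun _ ↦ 2 * η) x) := by
  filter_upwards [hμΩ, ae_mem_interior_of_convex hΩv hμ hμΩ,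
    ae_sub_apply_eq_norm_sub hΩ hμΩ hu hT, hf] with x hx hx_int hx_ray ⟨g, hg, hfx⟩
  have hg_norm : ‖g‖ ≤ 1 :=
    norm_gradient_le_one_of_lipschitzOnWith_one (mem_interior_iff_mem_nhds.1 hx_int) hu.1 hg
  rw [hfx]
  by_cases hfar : η ≤ ‖x - T x‖
  · have hinner := inner_gradient_eq_norm_sub_of_sub_eq_norm_sub hΩv hu.1 hx (hT.2.1 hx) hg hx_ray
    rw [indicator_of_mem (by exact ⟨hx, hfar⟩)]
    linarith [norm_sub_smul_sub_le_of_inner_eq_norm hg_norm hinner hfar]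
  · rw [indicator_of_notMem fun h ↦ hfar h.2, sub_zero]
    exact norm_sub_smul_sub_le hg_norm hη

theorem W1_map_descent_le [IsProbabilityMeasure μ]
    (hΩ : IsCompact Ω) (hΩv : Convex ℝ Ω) (hμΩ : ∀ᵐ x ∂μ, x ∈ Ω)
    (hμ : μ ≪ volume) (hu : IsKantorovichPotential Ω μ ν u) (hT : IsOptimalMap Ω μ ν T)
    (hη : 0 ≤ η) (hfm : Measurable f)
    (hf : ∀ᵐ x ∂μ, ∃ g, HasGradientWithinAt u g Ω x ∧ f x = x - η • g) :
    W1 (μ.map f) ν ≤ W1 μ ν + η * (1 - 2 * μ.real {x | x ∈ Ω ∧ η ≤ ‖x - T x‖}) := by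
  have hdescent := ae_norm_descent_sub_le hΩ hΩv hμΩ hμ hu hT hη hf
  obtain ⟨hTm, hTΩ, hTν, hT_cost⟩ := hT
  set far : Set (EuclideanSpace ℝ (Fin d)) := {x | x ∈ Ω ∧ η ≤ ‖x - T x‖}
  have hfar : MeasurableSet far :=
    hΩ.measurableSet.inter (measurableSet_le measurable_const (measurable_id.sub hTm).norm)
  have hcost_int := integrable_norm_sub hΩ.isBounded hμΩ hTm hTΩ
  have hgain_int : Integrable (far.indicator fun _ ↦ 2 * η) μ :=
    (integrable_const _).indicator hfar
  have hchange_int : Integrable (fun x ↦ η - far.indicator (fun _ ↦ 2 * η) x) μ :=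
    (integrable_const η).sub hgain_int
  calc W1 (μ.map f) ν ≤ ∫ x, ‖f x - T x‖ ∂μ := hTν ▸ W1_map_map_le_integral hfm hTm
    _ ≤ ∫ x, (‖x - T x‖ + (η - far.indicator (fun _ ↦ 2 * η) x)) ∂μ :=
      integral_mono_of_nonneg (.of_forall fun _ ↦ norm_nonneg _)
        (hcost_int.add hchange_int) hdescent
    _ = W1 μ ν + (η - μ.real far * (2 * η)) := by
      rw [integral_add hcost_int hchange_int, integral_sub (integrable_const η) hgain_int,
        integral_indicator_const _ hfar, hT_cost]
      simp
    _ = W1 μ ν + η * (1 - 2 * μ.real far) := by ring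

end Wasserstein

theorem stmt13 {d : ℕ} (hd : 1 ≤ d) (Ω : Set (EuclideanSpace ℝ (Fin d)))
    (hΩc : IsCompact Ω) (hΩv : Convex ℝ Ω)
    (μ ν : Measure (EuclideanSpace ℝ (Fin d)))
    [IsProbabilityMeasure μ] [IsProbabilityMeasure ν]
    (hμΩ : μ Ωᶜ = 0) (hνΩ : ν Ωᶜ = 0) (hac : μ ≪ volume)
    (u0 : EuclideanSpace ℝ (Fin d) → ℝ) (hu0 : IsKantorovichPotential Ω μ ν u0)
    (T0 : EuclideanSpace ℝ (Fin d) → EuclideanSpace ℝ (Fin d))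
    (hT0 : IsOptimalMap Ω μ ν T0)
    (η : ℝ) (hη : 0 < η)
    (f : EuclideanSpace ℝ (Fin d) → EuclideanSpace ℝ (Fin d)) (hf : Measurable f)
    (hfae : ∀ᵐ x ∂(volume.restrict Ω), ∃ g : EuclideanSpace ℝ (Fin d),
      HasGradientWithinAt u0 g Ω x ∧ f x = x - η • g)
    (hmed : 1 / 2 < μ {x | x ∈ Ω ∧ η ≤ ‖x - T0 x‖}) :
    W1 (μ.map f) ν < W1 μ ν := by
  have hμΩ' : ∀ᵐ x ∂μ, x ∈ Ω := hμΩ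
  have hf_grad : ∀ᵐ x ∂μ, ∃ g, HasGradientWithinAt u0 g Ω x ∧ f x = x - η • g := by
    filter_upwards [hac.ae_le ((ae_restrict_iff' hΩc.measurableSet).1 hfae), hμΩ'] with x h hx
    exact h hx
  have hbound := W1_map_descent_le hΩc hΩv hμΩ' hac hu0 hT0 hη.le hf hf_grad
  have hfar : 1 / 2 < μ.real {x | x ∈ Ω ∧ η ≤ ‖x - T0 x‖} := by
    simpa [Measure.real] using (ENNReal.toReal_lt_toReal (by simp) (measure_ne_top μ _)).2 hmed
  have hgain : η * (1 - 2 * μ.real {x | x ∈ Ω ∧ η ≤ ‖x - T0 x‖}) < 0 :=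
    mul_neg_of_pos_of_neg hη (by linarith)
  linarith
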